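/- For the star graph *_n (n ≥ 3), the set of achievable heights is P_h(*_n) = {2,3,4,...} ∪ {+∞}: every integer m ≥ 2 and +∞ occur as h(G,*_n) for some subgroup G of Homeo(*_n), and no value below 2 occurs. -/

import Mathlib

open Set Topology unitInterval

noncomputable section

/-- Group structure on self-homeomorphisms (composition). -/
instance homeoGroup {X : Type*} [TopologicalSpace X] : Group (X ≃ₜ X) where
  mul f g := g.trans f
  one := Homeomorph.refl X
  inv := Homeomorph.symm
  mul_assoc _ _ _ := Homeomorph.ext fun _ => rfl
  one_mul _ := Homeomorph.ext fun _ => rfl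
  mul_one _ := Homeomorph.ext fun _ => rfl
  inv_mul_cancel f := Homeomorph.ext fun x => f.symm_apply_apply x

/-- A set is invariant under a group of homeomorphisms. -/
def InvariantUnder {X : Type*} [TopologicalSpace X] (G : Subgroup (X ≃ₜ X)) (Y : Set X) : Prop :=
  ∀ g ∈ G, ∀ y ∈ Y, g y ∈ Y

/-- Lengths of strictly increasing chains of nonempty closed invariant sets ending at `univ`. -/
def heightSet {X : Type*} [TopologicalSpace X] (G : Subgroup (X ≃ₜ X)) : Set ℕ :=
  {n | ∃ Y : Fin (n + 1) → Set X,
    StrictMono Y ∧ (∀ i, (Y i).Nonempty ∧ IsClosed (Y i) ∧ InvariantUnder G (Y i)) ∧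
    Y (Fin.last n) = Set.univ}

/-- The height of a transformation group. -/
def height {X : Type*} [TopologicalSpace X] (G : Subgroup (X ≃ₜ X)) : ℕ∞ :=
  sSup ((fun n : ℕ => (n : ℕ∞)) '' heightSet G)

/-- The set of achievable heights on phase space `X`. -/
def PH (X : Type*) [TopologicalSpace X] : Set ℕ∞ :=
  {h | ∃ G : Subgroup (X ≃ₜ X), height G = h}

end
noncomputable section

/-- The `k`-th outer vertex of the star graph, an `n`-th root of unity. -/
def starVertex (n : ℕ) (k : Fin n) : ℂ :=
  Complex.exp (2 * (Real.pi : ℂ) * Complex.I * ((k : ℕ) : ℂ) / (n : ℂ))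

/-- The star graph `*_n`: union of `n` segments from the center `0` to the roots of unity. -/
def starGraph (n : ℕ) : Set ℂ := ⋃ k : Fin n, segment ℝ 0 (starVertex n k)

end


open Filter

theorem height_eq_of_class {X : Type*} [TopologicalSpace X] (G : Subgroup (X ≃ₜ X)) (c : X → ℕ)
    (m : ℕ) (hc : ∀ g ∈ G, ∀ x, c (g x) = c x) (hle : ∀ x, c x ≤ m)
    (hsurj : ∀ i ≤ m, ∃ x, c x = i) (hlsc : ∀ x, ∀ᶠ y in 𝓝 x, c x ≤ c y)
    (htr : ∀ x y, c x = c y → ∃ g ∈ G, g x = y) : height G = m := by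
  classical
  apply le_antisymm
  · apply sSup_le
    rintro _ ⟨N, ⟨Y, hY, hprop, -⟩, rfl⟩
    have : N ≤ m := by
      let f : Fin (N + 1) → Finset ℕ :=
        fun i => (Finset.range (m + 1)).filter (fun j => ∃ x ∈ Y i, c x = j)
      have hf : StrictMono f := by
        intro i j hij
        have hs := hY hij
        obtain ⟨hsub, x, hxj, hxi⟩ := Set.ssubset_iff_exists.1 hs
        refine Finset.ssubset_iff_of_subset ?_ |>.2 ⟨c x, ?_, ?_⟩
        · intro k hk
          simp only [f, Finset.mem_filter] at hk ⊢
          obtain ⟨h1, y, hy, rfl⟩ := hk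
          exact ⟨h1, y, hsub hy, rfl⟩
        · simp only [f, Finset.mem_filter, Finset.mem_range]
          exact ⟨Nat.lt_succ_of_le (hle x), x, hxj, rfl⟩
        · simp only [f, Finset.mem_filter, Finset.mem_range, not_and]
          rintro - ⟨y, hy, hyx⟩
          obtain ⟨g, hg, rfl⟩ := htr y x hyx
          exact hxi ((hprop i).2.2 g hg y hy)
      have hpos : ∀ i, 0 < (f i).card := by
        intro i
        obtain ⟨x, hx⟩ := (hprop i).1
        apply Finset.card_pos.2 ⟨c x, ?_⟩
        simp only [f, Finset.mem_filter, Finset.mem_range]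
        exact ⟨Nat.lt_succ_of_le (hle x), x, hx, rfl⟩
      have hup : ∀ i, (f i).card ≤ m + 1 := fun i => by
        simpa using Finset.card_filter_le (Finset.range (m + 1)) (fun j => ∃ x ∈ Y i, c x = j)
      let e : Fin (N + 1) → Fin (m + 1) :=
        fun i => ⟨(f i).card - 1, by have := hup i; have := hpos i; omega⟩
      have he : StrictMono e := by
        intro i j hij
        have h1 := Finset.card_lt_card (hf hij)
        have := hpos i
        simp only [e, Fin.mk_lt_mk]
        omega
      have := Fintype.card_le_of_injective e he.injective
      simpa using this
    change (N : ℕ∞) ≤ m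
    exact_mod_cast this
  · apply le_sSup
    refine ⟨m, ⟨fun i => {x | c x ≤ i}, ?_, ?_, ?_⟩, rfl⟩
    · intro i j hij
      refine Set.ssubset_iff_exists.2 ⟨fun x (hx : c x ≤ i) => hx.trans hij.le, ?_⟩
      obtain ⟨x, hx⟩ := hsurj j (Nat.le_of_lt_succ j.2)
      refine ⟨x, hx.le, ?_⟩
      simp only [Set.mem_ofPred_eq, hx, not_le]
      exact hij
    · intro i
      refine ⟨?_, ?_, ?_⟩
      · obtain ⟨x, hx⟩ := hsurj 0 (Nat.zero_le _)
        exact ⟨x, by simp [hx]⟩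
      · rw [← isOpen_compl_iff, isOpen_iff_mem_nhds]
        intro x hx
        simp only [mem_compl_iff, Set.mem_ofPred_eq, not_le] at hx
        filter_upwards [hlsc x] with y hy
        simp only [mem_compl_iff, Set.mem_ofPred_eq, not_le]
        omega
      · intro g hg y hy
        simpa [hc g hg y] using hy
    · ext x
      simpa using hle x

/-- Inverse of the sigmoid. -/
noncomputable def lgt (t : ℝ) : ℝ := Real.log t - Real.log (1 - t)

theorem lgt_sigmoid (x : ℝ) : lgt (Real.sigmoid x) = x := by
  have h := Real.sigmoid_mul_rexp_neg x
  rw [Real.sigmoid_neg] at h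
  rw [lgt, ← h, Real.log_mul (Real.sigmoid_pos x).ne' (Real.exp_pos _).ne', Real.log_exp]
  ring

theorem continuousAt_lgt {t : ℝ} (h0 : 0 < t) (h1 : t < 1) : ContinuousAt lgt t := by
  unfold lgt
  have : 1 - t ≠ 0 := by linarith
  have := h0.ne'
  fun_prop (disch := assumption)

theorem exists_sigmoid {t : ℝ} (h0 : 0 < t) (h1 : t < 1) : ∃ x, t = Real.sigmoid x := by
  have : t ∈ range Real.sigmoid := by rw [Real.range_sigmoid]; exact ⟨h0, h1⟩
  obtain ⟨x, hx⟩ := this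
  exact ⟨x, hx.symm⟩

theorem fract_add_sigmoid (k : ℤ) (x : ℝ) : Int.fract ((k : ℝ) + Real.sigmoid x) = Real.sigmoid x := by
  rw [Int.fract_intCast_add, Int.fract_eq_self]
  exact ⟨Real.sigmoid_nonneg x, Real.sigmoid_lt_one x⟩

theorem floor_add_sigmoid (k : ℤ) (x : ℝ) : ⌊(k : ℝ) + Real.sigmoid x⌋ = k := by
  rw [Int.floor_eq_iff]
  have := Real.sigmoid_nonneg x
  have := Real.sigmoid_lt_one x
  constructor <;> linarith

theorem real_rep (x : ℝ) : ∃ k : ℤ, x = k ∨ ∃ y, x = k + Real.sigmoid y := by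
  refine ⟨⌊x⌋, ?_⟩
  by_cases h : Int.fract x = 0
  · left
    have := Int.floor_add_fract x
    linarith
  · right
    obtain ⟨y, hy⟩ := exists_sigmoid (lt_of_le_of_ne (Int.fract_nonneg x) (Ne.symm h))
      (Int.fract_lt_one x)
    exact ⟨y, by rw [← hy, Int.floor_add_fract]⟩

noncomputable def extFun (f : ℝ → ℝ) (x : ℝ) : ℝ :=
  if Int.fract x = 0 then x else ⌊x⌋ + Real.sigmoid (f (lgt (Int.fract x)))

theorem extFun_int (f : ℝ → ℝ) (k : ℤ) : extFun f k = k := by simp [extFun]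

theorem extFun_sig (f : ℝ → ℝ) (k : ℤ) (x : ℝ) :
    extFun f (k + Real.sigmoid x) = k + Real.sigmoid (f x) := by
  rw [extFun, fract_add_sigmoid, floor_add_sigmoid, lgt_sigmoid, if_neg (Real.sigmoid_pos x).ne']

theorem extFun_strictMono (f : ℝ → ℝ) (hf : StrictMono f) : StrictMono (extFun f) := by
  intro x y hxy
  obtain ⟨k, rfl | ⟨x, rfl⟩⟩ := real_rep x <;> obtain ⟨l, rfl | ⟨y, rfl⟩⟩ := real_rep y <;>
    simp only [extFun_int, extFun_sig]
  · exact hxy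
  · have h1 := Real.sigmoid_lt_one y
    have h2 := Real.sigmoid_pos (f y)
    have : (k : ℝ) < (l + 1 : ℤ) := by push_cast; linarith
    have : (k : ℝ) ≤ l := by exact_mod_cast Int.lt_add_one_iff.1 (Int.cast_lt.1 this)
    linarith
  · have h1 := Real.sigmoid_pos x
    have h2 := Real.sigmoid_lt_one (f x)
    have : (k : ℝ) < l := by linarith
    have : (k : ℝ) + 1 ≤ l := by exact_mod_cast Int.add_one_le_iff.2 (Int.cast_lt.1 this)
    linarith
  · have h1 := Real.sigmoid_pos x
    have h2 := Real.sigmoid_lt_one (f x)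
    have h3 := Real.sigmoid_lt_one y
    have h4 := Real.sigmoid_pos (f y)
    rcases lt_trichotomy k l with h | h | h
    · have : (k : ℝ) + 1 ≤ l := by exact_mod_cast Int.add_one_le_iff.2 h
      linarith
    · subst h
      have : Real.sigmoid x < Real.sigmoid y := by linarith
      have := Real.sigmoid_lt (hf (Real.sigmoid_lt_iff.1 this))
      linarith
    · have : (l : ℝ) + 1 ≤ k := by exact_mod_cast Int.add_one_le_iff.2 h
      linarith

noncomputable def extIso (f : ℝ ≃o ℝ) : ℝ ≃o ℝ :=
  (extFun_strictMono f f.strictMono).orderIsoOfRightInverse (extFun f) (extFun f.symm) (by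
    intro x
    obtain ⟨k, rfl | ⟨x, rfl⟩⟩ := real_rep x <;> simp [extFun_int, extFun_sig])

theorem extIso_int (f : ℝ ≃o ℝ) (k : ℤ) : extIso f k = k := extFun_int f k

theorem extIso_sig (f : ℝ ≃o ℝ) (k : ℤ) (x : ℝ) :
    extIso f (k + Real.sigmoid x) = k + Real.sigmoid (f x) := extFun_sig f k x

/-- A lower semicontinuous homogeneous colouring of the line with exactly `k+1` colours. -/
theorem exists_colouring (k : ℕ) : ∃ d : ℝ → ℕ, (∀ x, d x ≤ k) ∧ (∀ i ≤ k, ∃ x, d x = i) ∧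
    (∀ x, ∀ᶠ y in 𝓝 x, d x ≤ d y) ∧
    (∀ x y, d x = d y → ∃ f : ℝ ≃o ℝ, (∀ z, d (f z) = d z) ∧ f x = y) := by
  induction k with
  | zero =>
    refine ⟨fun _ => 0, by simp, by simp, by simp, fun x y _ => ⟨OrderIso.addRight (y - x), by simp, by simp⟩⟩
  | succ k ih =>
    obtain ⟨d, hle, hsurj, hlsc, htr⟩ := ih
    let D : ℝ → ℕ := fun x => if Int.fract x = 0 then 0 else 1 + d (lgt (Int.fract x))
    have D0 : ∀ l : ℤ, D l = 0 := by intro l; simp [D]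
    have D1 : ∀ (l : ℤ) x, D (l + Real.sigmoid x) = 1 + d x := by
      intro l x
      simp only [D]
      rw [fract_add_sigmoid, lgt_sigmoid, if_neg (Real.sigmoid_pos x).ne']
    refine ⟨D, ?_, ?_, ?_, ?_⟩
    · intro x
      obtain ⟨l, rfl | ⟨x, rfl⟩⟩ := real_rep x
      · simp [D0]
      · rw [D1]; have := hle x; omega
    · intro i hi
      rcases i with _ | i
      · exact ⟨(0 : ℤ), D0 0⟩
      · obtain ⟨x, hx⟩ := hsurj i (by omega)
        exact ⟨(0 : ℤ) + Real.sigmoid x, by rw [D1, hx, add_comm]⟩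
    · intro x
      by_cases h : Int.fract x = 0
      · simp [D, h]
      · have hp : 0 < Int.fract x := lt_of_le_of_ne (Int.fract_nonneg x) (Ne.symm h)
        have hc : ContinuousAt Int.fract x := continuousAt_fract (by
          intro hx; apply h; rw [Int.fract]; linarith)
        have hc2 : ContinuousAt (fun y => lgt (Int.fract y)) x :=
          ContinuousAt.comp (g := lgt) (continuousAt_lgt hp (Int.fract_lt_one x)) hc
        filter_upwards [hc.eventually (lt_mem_nhds hp), hc2.eventually (hlsc _)] with y hy1 hy2
        simp only [D, if_neg h, if_neg hy1.ne']
        omega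
    · intro x y hxy
      obtain ⟨k, rfl | ⟨x, rfl⟩⟩ := real_rep x <;> obtain ⟨l, rfl | ⟨y, rfl⟩⟩ := real_rep y <;>
        simp only [D0, D1] at hxy
      · refine ⟨OrderIso.addRight ((l - k : ℤ) : ℝ), ?_, by simp⟩
        intro z
        simp only [OrderIso.addRight_apply, D, Int.fract_add_intCast]
      · omega
      · omega
      · obtain ⟨f, hf, rfl⟩ := htr x y (by omega)
        refine ⟨(extIso f).trans (OrderIso.addRight ((l - k : ℤ) : ℝ)), ?_, ?_⟩
        · intro z
          have : D (extIso f z) = D z := by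
            obtain ⟨k, rfl | ⟨x, rfl⟩⟩ := real_rep z
            · rw [extIso_int]
            · rw [extIso_sig, D1, D1, hf]
          rw [← this]
          simp only [OrderIso.trans_apply, OrderIso.addRight_apply, D, Int.fract_add_intCast]
        · simp only [OrderIso.trans_apply, OrderIso.addRight_apply, extIso_sig]
          push_cast; ring

/-- The colouring of the unit interval used on each edge. -/
theorem exists_edge_colouring (m : ℕ) (hm : 2 ≤ m) : ∃ D : ℝ → ℕ, (∀ x, D x ≤ m) ∧
    (∀ i ≤ m, ∃ x ∈ Icc (0 : ℝ) 1, D x = i) ∧ (∀ x, ∀ᶠ y in 𝓝 x, D x ≤ D y) ∧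
    (∀ x ∈ Icc (0 : ℝ) 1, ∀ y ∈ Icc (0 : ℝ) 1, D x = D y → ∃ f : ℝ ≃o ℝ, f 0 = 0 ∧ f 1 = 1 ∧
      (∀ z ∈ Icc (0 : ℝ) 1, D (f z) = D z) ∧ f x = y) := by
  obtain ⟨k, rfl⟩ := Nat.exists_eq_add_of_le hm
  obtain ⟨d, hle, hsurj, hlsc, htr⟩ := exists_colouring k
  let D : ℝ → ℕ := fun t => if t ≤ 0 then 0 else if 1 ≤ t then 1 else 2 + d (lgt t)
  have D0 : D 0 = 0 := by simp [D]
  have D1 : D 1 = 1 := by simp [D]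
  have D2 : ∀ x, D (Real.sigmoid x) = 2 + d x := by
    intro x
    simp only [D]
    rw [if_neg (Real.sigmoid_pos x).not_ge, if_neg (Real.sigmoid_lt_one x).not_ge, lgt_sigmoid]
  have rep : ∀ x ∈ Icc (0 : ℝ) 1, x = 0 ∨ x = 1 ∨ ∃ y, x = Real.sigmoid y := by
    intro x hx
    by_cases h0 : x = 0
    · exact Or.inl h0
    by_cases h1 : x = 1
    · exact Or.inr (Or.inl h1)
    exact Or.inr (Or.inr (exists_sigmoid (lt_of_le_of_ne hx.1 (Ne.symm h0)) (lt_of_le_of_ne hx.2 h1)))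
  refine ⟨D, ?_, ?_, ?_, ?_⟩
  · intro x
    have := hle (lgt x)
    simp only [D]
    split_ifs <;> omega
  · intro i hi
    rcases i with _ | _ | i
    · exact ⟨0, by simp, D0⟩
    · exact ⟨1, by simp, D1⟩
    · obtain ⟨x, hx⟩ := hsurj i (by omega)
      exact ⟨Real.sigmoid x, ⟨Real.sigmoid_nonneg x, Real.sigmoid_le_one x⟩, by rw [D2]; omega⟩
  · intro x
    by_cases h0 : x ≤ 0
    · simp [D, h0]
    by_cases h1 : 1 ≤ x
    · filter_upwards [lt_mem_nhds (lt_of_not_ge h0)] with y hy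
      simp only [D, if_neg h0, if_pos h1, if_neg hy.not_ge]
      split_ifs <;> omega
    · filter_upwards [lt_mem_nhds (lt_of_not_ge h0), gt_mem_nhds (lt_of_not_ge h1),
        (continuousAt_lgt (lt_of_not_ge h0) (lt_of_not_ge h1)).eventually (hlsc _)] with y hy1 hy2 hy3
      simp only [D, if_neg h0, if_neg h1, if_neg hy1.not_ge, if_neg hy2.not_ge]
      omega
  · intro x hx y hy hxy
    obtain rfl | rfl | ⟨x, rfl⟩ := rep x hx <;> obtain rfl | rfl | ⟨y, rfl⟩ := rep y hy <;>
      simp only [D0, D1, D2] at hxy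
    · exact ⟨OrderIso.refl ℝ, by simp⟩
    · omega
    · omega
    · omega
    · exact ⟨OrderIso.refl ℝ, by simp⟩
    · omega
    · omega
    · omega
    · obtain ⟨f, hf, rfl⟩ := htr x y (by omega)
      have e0 : extIso f 0 = 0 := by simpa using extIso_int f 0
      have e1 : extIso f 1 = 1 := by simpa using extIso_int f 1
      have e2 : ∀ x, extIso f (Real.sigmoid x) = Real.sigmoid (f x) := fun x => by
        simpa using extIso_sig f 0 x
      refine ⟨extIso f, e0, e1, ?_, e2 x⟩
      intro z hz
      obtain rfl | rfl | ⟨z, rfl⟩ := rep z hz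
      · rw [e0]
      · rw [e1]
      · rw [e2, D2, D2, hf]

theorem starVertex_pow (n : ℕ) (hn : 3 ≤ n) (k : Fin n) : starVertex n k ^ n = 1 := by
  have hn0 : (n : ℂ) ≠ 0 := by exact_mod_cast (by omega : n ≠ 0)
  rw [starVertex, ← Complex.exp_nat_mul, Complex.exp_eq_one_iff]
  exact ⟨k, by push_cast; field_simp⟩

theorem exists_starVertex (n : ℕ) (hn : 3 ≤ n) (w : ℂ) (hw : w ^ n = 1) :
    ∃ k : Fin n, w = starVertex n k := by
  have : NeZero n := ⟨by omega⟩
  have hp := Complex.isPrimitiveRoot_exp n (by omega)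
  obtain ⟨i, hi, rfl⟩ := hp.eq_pow_of_pow_eq_one hw
  refine ⟨⟨i, hi⟩, ?_⟩
  rw [starVertex, ← Complex.exp_nat_mul]
  congr 1
  simp only []
  ring

theorem norm_of_pow (n : ℕ) (hn : 3 ≤ n) (w : ℂ) (hw : w ^ n = 1) : ‖w‖ = 1 :=
  Complex.norm_eq_one_of_pow_eq_one hw (by omega)

theorem mem_star (n : ℕ) (hn : 3 ≤ n) (x : ℂ) :
    x ∈ starGraph n ↔ ‖x‖ ≤ 1 ∧ x ^ n = (‖x‖ : ℂ) ^ n := by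
  rw [starGraph, mem_iUnion]
  constructor
  · rintro ⟨k, hk⟩
    rw [segment_eq_image] at hk
    obtain ⟨t, ⟨h0, h1⟩, rfl⟩ := hk
    have hv := starVertex_pow n hn k
    have hv1 := norm_of_pow n hn _ hv
    have hnorm : ‖(1 - t) • (0 : ℂ) + t • starVertex n k‖ = t := by
      simp [hv1, abs_of_nonneg h0]
    rw [hnorm]
    refine ⟨h1, ?_⟩
    simp [mul_pow, hv]
  · rintro ⟨h1, h2⟩
    by_cases hx : x = 0
    · subst hx
      exact ⟨⟨0, by omega⟩, left_mem_segment ℝ _ _⟩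
    · have hx' : (‖x‖ : ℂ) ≠ 0 := by simpa using hx
      obtain ⟨k, hk⟩ := exists_starVertex n hn (x / ‖x‖) (by
        rw [div_pow, h2, div_self (pow_ne_zero _ hx')])
      refine ⟨k, ?_⟩
      rw [segment_eq_image]
      refine ⟨‖x‖, ⟨norm_nonneg x, h1⟩, ?_⟩
      rw [← hk]
      simp only [smul_zero, zero_add, Complex.real_smul]
      field_simp

theorem smul_mem_star (n : ℕ) (hn : 3 ≤ n) {x : ℂ} (hx : x ∈ starGraph n) {t : ℝ} (ht : 0 ≤ t)
    (h1 : t * ‖x‖ ≤ 1) : t • x ∈ starGraph n := by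
  rw [mem_star n hn] at hx ⊢
  have : ‖t • x‖ = t * ‖x‖ := by rw [norm_smul, Real.norm_of_nonneg ht]
  rw [this]
  refine ⟨h1, ?_⟩
  rw [Complex.real_smul, mul_pow, hx.2]
  push_cast
  ring

theorem rot_mem_star (n : ℕ) (hn : 3 ≤ n) {x : ℂ} (hx : x ∈ starGraph n) {w : ℂ} (hw : w ^ n = 1) :
    w * x ∈ starGraph n := by
  rw [mem_star n hn] at hx ⊢
  rw [norm_mul, norm_of_pow n hn w hw, one_mul, mul_pow, hw, one_mul]
  exact hx

theorem root_mem_star (n : ℕ) (hn : 3 ≤ n) {w : ℂ} (hw : w ^ n = 1) : w ∈ starGraph n := by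
  rw [mem_star n hn, norm_of_pow n hn w hw, hw]
  simp

/-- Rotation of the star. -/
noncomputable def rotHomeo (n : ℕ) (hn : 3 ≤ n) (w : ℂ) (hw : w ^ n = 1) :
    starGraph n ≃ₜ starGraph n where
  toFun x := ⟨w * x, rot_mem_star n hn x.2 hw⟩
  invFun x := ⟨w⁻¹ * x, rot_mem_star n hn x.2 (by rw [inv_pow, hw, inv_one])⟩
  left_inv x := by
    have : w ≠ 0 := by rintro rfl; rw [zero_pow (by omega)] at hw; simp at hw
    ext; simp [this]
  right_inv x := by
    have : w ≠ 0 := by rintro rfl; rw [zero_pow (by omega)] at hw; simp at hw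
    ext; simp [this]
  continuous_toFun := by fun_prop
  continuous_invFun := by fun_prop

noncomputable def radFun (f : ℝ ≃o ℝ) (x : ℂ) : ℂ := (f ‖x‖ / ‖x‖) • x

theorem norm_radFun (f : ℝ ≃o ℝ) (h0 : f 0 = 0) (x : ℂ) : ‖radFun f x‖ = f ‖x‖ := by
  have hf : 0 ≤ f ‖x‖ := by rw [← h0]; exact f.monotone (norm_nonneg x)
  by_cases hx : x = 0
  · simp [radFun, hx, h0]
  · have : ‖x‖ ≠ 0 := by simpa using hx
    rw [radFun, norm_smul, Real.norm_of_nonneg (by positivity)]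
    field_simp

theorem radFun_symm (f : ℝ ≃o ℝ) (h0 : f 0 = 0) (x : ℂ) : radFun f.symm (radFun f x) = x := by
  have h := norm_radFun f h0 x
  by_cases hx : x = 0
  · simp [radFun, hx]
  · have h1 : ‖x‖ ≠ 0 := by simpa using hx
    have h2 : f ‖x‖ ≠ 0 := by
      rw [← h0]; exact fun h => h1 (f.injective h)
    rw [radFun, h, radFun, smul_smul]
    simp only [OrderIso.symm_apply_apply]
    rw [div_mul_div_cancel₀ h2, div_self h1, one_smul]

theorem continuous_radFun (f : ℝ ≃o ℝ) (h0 : f 0 = 0) : Continuous (radFun f) := by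
  have hf : Continuous f := f.continuous
  rw [continuous_iff_continuousAt]
  intro x
  by_cases hx : x = 0
  · subst hx
    have : radFun f 0 = 0 := by simp [radFun]
    rw [ContinuousAt, this, tendsto_zero_iff_norm_tendsto_zero]
    simp only [norm_radFun f h0]
    have : Continuous (fun x : ℂ => f ‖x‖) := by fun_prop
    simpa [h0] using this.tendsto 0
  · have h1 : ‖x‖ ≠ 0 := by simpa using hx
    unfold radFun
    fun_prop (disch := assumption)

theorem radFun_mem (n : ℕ) (hn : 3 ≤ n) (f : ℝ ≃o ℝ) (h0 : f 0 = 0) (h1 : f 1 = 1) {x : ℂ}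
    (hx : x ∈ starGraph n) : radFun f x ∈ starGraph n := by
  have hf : 0 ≤ f ‖x‖ := by rw [← h0]; exact f.monotone (norm_nonneg x)
  have hf1 : f ‖x‖ ≤ 1 := by rw [← h1]; exact f.monotone ((mem_star n hn x).1 hx).1
  apply smul_mem_star n hn hx (by positivity)
  by_cases hx : ‖x‖ = 0
  · simp [hx]
  · rwa [div_mul_cancel₀ _ hx]

/-- Radial homeomorphism of the star. -/
noncomputable def radHomeo (n : ℕ) (hn : 3 ≤ n) (f : ℝ ≃o ℝ) (h0 : f 0 = 0) (h1 : f 1 = 1) :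
    starGraph n ≃ₜ starGraph n where
  toFun x := ⟨radFun f x, radFun_mem n hn f h0 h1 x.2⟩
  invFun x := ⟨radFun f.symm x, radFun_mem n hn f.symm (by rw [OrderIso.symm_apply_eq, h0])
    (by rw [OrderIso.symm_apply_eq, h1]) x.2⟩
  left_inv x := by ext; simp [radFun_symm f h0]
  right_inv x := by
    ext
    have := radFun_symm f.symm (by rw [OrderIso.symm_apply_eq, h0]) x
    simpa using this
  continuous_toFun := by have := continuous_radFun f h0; fun_prop
  continuous_invFun := by
    have := continuous_radFun f.symm (by rw [OrderIso.symm_apply_eq, h0]); fun_prop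

theorem exists_norm (n : ℕ) (hn : 3 ≤ n) (t : ℝ) (ht : t ∈ Icc (0 : ℝ) 1) :
    ∃ x : starGraph n, ‖(x : ℂ)‖ = t :=
  ⟨⟨t • (1 : ℂ), smul_mem_star n hn (root_mem_star n hn (one_pow n)) ht.1 (by simpa using ht.2)⟩, by
    simp [abs_of_nonneg ht.1]⟩

theorem finite_height_mem (n : ℕ) (hn : 3 ≤ n) (m : ℕ) (hm : 2 ≤ m) :
    (m : ℕ∞) ∈ PH (starGraph n) := by
  obtain ⟨D, hle, hsurj, hlsc, htr⟩ := exists_edge_colouring m hm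
  let c : starGraph n → ℕ := fun x => D ‖(x : ℂ)‖
  have hI : ∀ x : starGraph n, ‖(x : ℂ)‖ ∈ Icc (0 : ℝ) 1 := fun x =>
    ⟨norm_nonneg _, ((mem_star n hn x).1 x.2).1⟩
  let G : Subgroup (starGraph n ≃ₜ starGraph n) :=
    { carrier := {g | ∀ x, c (g x) = c x}
      mul_mem' := by
        intro a b ha hb x
        exact (ha (b x)).trans (hb x)
      one_mem' := fun x => rfl
      inv_mem' := by
        intro a ha x
        have := ha (a.symm x)
        rw [a.apply_symm_apply] at this
        exact this.symm }
  refine ⟨G, height_eq_of_class G c m (fun g hg => hg) (fun x => hle _) ?_ ?_ ?_⟩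
  · intro i hi
    obtain ⟨t, ht, rfl⟩ := hsurj i hi
    obtain ⟨x, rfl⟩ := exists_norm n hn t ht
    exact ⟨x, rfl⟩
  · intro x
    have : ContinuousAt (fun y : starGraph n => ‖(y : ℂ)‖) x := by fun_prop
    exact this.eventually (hlsc _)
  · intro x y hxy
    obtain ⟨f, h0, h1, hf, hfx⟩ := htr _ (hI x) _ (hI y) hxy
    let z := radHomeo n hn f h0 h1 x
    have hz : ‖(z : ℂ)‖ = ‖(y : ℂ)‖ := (norm_radFun f h0 x).trans hfx
    have hrad : ∀ u, c (radHomeo n hn f h0 h1 u) = c u := by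
      intro u
      have : ‖((radHomeo n hn f h0 h1 u : starGraph n) : ℂ)‖ = f ‖(u : ℂ)‖ := norm_radFun f h0 u
      simp only [c, this]
      exact hf _ (hI u)
    by_cases hy : (y : ℂ) = 0
    · refine ⟨radHomeo n hn f h0 h1, hrad, ?_⟩
      change z = y
      ext
      rw [hy] at hz ⊢
      simpa using hz
    · have hz0 : (z : ℂ) ≠ 0 := by
        intro h; rw [h] at hz; apply hy; simpa using hz.symm
      have hw : ((y : ℂ) / z) ^ n = 1 := by
        rw [div_pow, ((mem_star n hn z).1 z.2).2, ((mem_star n hn y).1 y.2).2, hz]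
        apply div_self
        apply pow_ne_zero
        simpa using hy
      refine ⟨rotHomeo n hn _ hw * radHomeo n hn f h0 h1, G.mul_mem ?_ hrad, ?_⟩
      · intro u
        have : ‖((rotHomeo n hn _ hw u : starGraph n) : ℂ)‖ = ‖(u : ℂ)‖ := by
          change ‖((y : ℂ) / z) * u‖ = _
          rw [norm_mul, norm_of_pow n hn _ hw, one_mul]
        simp only [c, this]
      · change rotHomeo n hn _ hw z = y
        ext
        change ((y : ℂ) / z) * z = y
        field_simp

theorem top_mem (n : ℕ) (hn : 3 ≤ n) : (⊤ : ℕ∞) ∈ PH (starGraph n) := by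
  refine ⟨⊥, ?_⟩
  rw [height, sSup_eq_top]
  intro b hb
  lift b to ℕ using hb.ne
  refine ⟨((b + 1 : ℕ) : ℕ∞), ⟨b + 1, ?_, rfl⟩, by exact_mod_cast Nat.lt_succ_self b⟩
  have hb0 : (0 : ℝ) < ((b + 1 : ℕ) : ℝ) := by positivity
  refine ⟨fun i => {x | ‖(x : ℂ)‖ ≤ (i : ℕ) / ((b + 1 : ℕ) : ℝ)}, ?_, ?_, ?_⟩
  · intro i j hij
    have hij' : ((i : ℕ) : ℝ) / ((b + 1 : ℕ) : ℝ) < (j : ℕ) / ((b + 1 : ℕ) : ℝ) := by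
      apply div_lt_div_of_pos_right _ hb0
      exact_mod_cast hij
    refine Set.ssubset_iff_exists.2 ⟨fun x (hx : _ ≤ _) => le_trans hx hij'.le, ?_⟩
    obtain ⟨x, hx⟩ := exists_norm n hn (((j : ℕ) : ℝ) / ((b + 1 : ℕ) : ℝ)) ⟨by positivity, by
      rw [div_le_one hb0]; exact_mod_cast Nat.le_of_lt_succ j.2⟩
    exact ⟨x, hx.le, fun h => absurd (hx ▸ h) hij'.not_ge⟩
  · intro i
    refine ⟨?_, ?_, ?_⟩
    · obtain ⟨x, hx⟩ := exists_norm n hn 0 (by simp)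
      refine ⟨x, ?_⟩
      change ‖(x : ℂ)‖ ≤ _
      rw [hx]; positivity
    · exact isClosed_le (by fun_prop) (by fun_prop)
    · intro g hg y hy
      rw [Subgroup.mem_bot] at hg
      subst hg
      exact hy
  · ext x
    have : ‖(x : ℂ)‖ ≤ 1 := ((mem_star n hn x).1 x.2).1
    simp only [Set.mem_ofPred_eq, Fin.val_last, mem_univ, iff_true]
    rwa [div_self hb0.ne']

/-- The segment from the centre to `x`, inside the star. -/
def starSeg (n : ℕ) (x : starGraph n) : Set (starGraph n) :=
  {y | ∃ t ∈ Icc (0 : ℝ) 1, (y : ℂ) = t • (x : ℂ)}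

def starZero (n : ℕ) (hn : 3 ≤ n) : starGraph n := ⟨0, by
  rw [mem_star n hn]; simp [zero_pow (by omega : n ≠ 0)]⟩

theorem starZero_mem_seg (n : ℕ) (hn : 3 ≤ n) (x : starGraph n) : starZero n hn ∈ starSeg n x :=
  ⟨0, by simp, by simp [starZero]⟩

theorem self_mem_seg (n : ℕ) (x : starGraph n) : x ∈ starSeg n x := ⟨1, by simp, by simp⟩

theorem seg_trans (n : ℕ) {x y : starGraph n} (h : y ∈ starSeg n x) : starSeg n y ⊆ starSeg n x := by
  obtain ⟨t, ht, hy⟩ := h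
  rintro z ⟨s, hs, hz⟩
  refine ⟨s * t, ⟨mul_nonneg hs.1 ht.1, mul_le_one₀ hs.2 ht.1 ht.2⟩, ?_⟩
  rw [hz, hy, smul_smul]

theorem seg_preconnected (n : ℕ) (hn : 3 ≤ n) (x : starGraph n) : IsPreconnected (starSeg n x) := by
  rw [← Topology.IsInducing.subtypeVal.isPreconnected_image]
  have : Subtype.val '' starSeg n x = (fun t : ℝ => t • (x : ℂ)) '' Icc (0 : ℝ) 1 := by
    ext z
    constructor
    · rintro ⟨y, ⟨t, ht, hy⟩, rfl⟩
      exact ⟨t, ht, hy.symm⟩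
    · rintro ⟨t, ht, rfl⟩
      refine ⟨⟨t • (x : ℂ), smul_mem_star n hn x.2 ht.1 ?_⟩, ⟨t, ht, rfl⟩, rfl⟩
      exact mul_le_one₀ ht.2 (norm_nonneg _) ((mem_star n hn x).1 x.2).1
  rw [this]
  exact isPreconnected_Icc.image _ (by fun_prop)

theorem avoid_preconnected (n : ℕ) (hn : 3 ≤ n) (p : starGraph n) :
    IsPreconnected {x : starGraph n | p ∉ starSeg n x} := by
  refine isPreconnected_of_forall (starZero n hn) ?_
  intro y hy
  exact ⟨starSeg n y, fun z hz h => hy (seg_trans n hz h), starZero_mem_seg n hn y,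
    self_mem_seg n y, seg_preconnected n hn y⟩

theorem norm_le_of_seg (n : ℕ) {x p : starGraph n} (h : p ∈ starSeg n x) :
    ‖(p : ℂ)‖ ≤ ‖(x : ℂ)‖ ∧ (‖(p : ℂ)‖ = ‖(x : ℂ)‖ → p = x) := by
  obtain ⟨t, ht, hp⟩ := h
  have : ‖(p : ℂ)‖ = t * ‖(x : ℂ)‖ := by rw [hp, norm_smul, Real.norm_of_nonneg ht.1]
  refine ⟨by rw [this]; exact mul_le_of_le_one_left (norm_nonneg _) ht.2, ?_⟩
  intro h
  ext
  by_cases hx : (x : ℂ) = 0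
  · rw [hp, hx, smul_zero]
  · have hx' : ‖(x : ℂ)‖ ≠ 0 := by simpa using hx
    have : t = 1 := by
      apply mul_right_cancel₀ hx'
      rw [← this, h, one_mul]
    rw [hp, this, one_smul]

theorem compl_preconnected_of_norm_one (n : ℕ) (hn : 3 ≤ n) (p : starGraph n)
    (hp : ‖(p : ℂ)‖ = 1) : IsPreconnected ({p}ᶜ : Set (starGraph n)) := by
  convert avoid_preconnected n hn p using 1
  ext x
  simp only [mem_compl_iff, mem_singleton_iff, Set.mem_ofPred_eq, not_iff_not]
  constructor
  · rintro rfl; exact self_mem_seg n _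
  · intro h
    have h1 := norm_le_of_seg n h
    exact (h1.2 (le_antisymm h1.1 (by rw [hp]; exact ((mem_star n hn x).1 x.2).1))).symm

theorem beyond_preconnected (n : ℕ) (hn : 3 ≤ n) (p : starGraph n) (hp : (p : ℂ) ≠ 0) :
    IsPreconnected {x : starGraph n | p ∈ starSeg n x ∧ x ≠ p} := by
  have hp' : 0 < ‖(p : ℂ)‖ := by simpa using hp
  rw [← Topology.IsInducing.subtypeVal.isPreconnected_image]
  have : Subtype.val '' {x : starGraph n | p ∈ starSeg n x ∧ x ≠ p} =
      (fun t : ℝ => t • (p : ℂ)) '' Ioc (1 : ℝ) (‖(p : ℂ)‖⁻¹) := by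
    ext z
    constructor
    · rintro ⟨x, ⟨h, hne⟩, rfl⟩
      obtain ⟨hle, heq⟩ := norm_le_of_seg n h
      obtain ⟨t, ht, hpt⟩ := h
      have ht0 : t ≠ 0 := by rintro rfl; simp at hpt; exact hp (by simp [hpt])
      have ht1 : t ≠ 1 := by rintro rfl; apply hne; ext; simpa using hpt.symm
      have htp : 0 < t := lt_of_le_of_ne ht.1 (Ne.symm ht0)
      refine ⟨t⁻¹, ⟨(one_lt_inv₀ htp).2 (lt_of_le_of_ne ht.2 ht1), ?_⟩, ?_⟩
      · apply inv_anti₀ hp'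
        rw [hpt, norm_smul, Real.norm_of_nonneg ht.1]
        exact mul_le_of_le_one_right ht.1 ((mem_star n hn x).1 x.2).1
      · simp only [hpt, smul_smul, inv_mul_cancel₀ ht0, one_smul]
    · rintro ⟨t, ht, rfl⟩
      have htp : 0 < t := lt_trans one_pos ht.1
      refine ⟨⟨t • (p : ℂ), smul_mem_star n hn p.2 htp.le ?_⟩, ⟨⟨t⁻¹, ⟨by positivity, ?_⟩, ?_⟩, ?_⟩, rfl⟩
      · rw [← le_div_iff₀ hp', one_div]; exact ht.2
      · exact inv_le_one_of_one_le₀ ht.1.le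
      · simp [htp.ne']
      · intro h
        have h2 : ‖t • (p : ℂ)‖ = ‖(p : ℂ)‖ := by rw [Subtype.ext_iff] at h; exact congrArg _ h
        rw [norm_smul, Real.norm_of_nonneg htp.le] at h2
        nlinarith [ht.1]
  rw [this]
  exact isPreconnected_Ioc.image _ (by fun_prop)

/-- A topological property of a point: its complement is covered by two preconnected subsets. -/
def TwoPiece {X : Type*} [TopologicalSpace X] (p : X) : Prop :=
  ∃ A B : Set X, IsPreconnected A ∧ IsPreconnected B ∧ ({p}ᶜ : Set X) = A ∪ B

theorem twoPiece_of_ne (n : ℕ) (hn : 3 ≤ n) (p : starGraph n) (hp : (p : ℂ) ≠ 0) : TwoPiece p := by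
  refine ⟨_, _, avoid_preconnected n hn p, beyond_preconnected n hn p hp, ?_⟩
  ext x
  simp only [mem_compl_iff, mem_singleton_iff, mem_union, Set.mem_ofPred_eq]
  constructor
  · intro h
    by_cases h1 : p ∈ starSeg n x
    · exact Or.inr ⟨h1, h⟩
    · exact Or.inl h1
  · rintro (h | h)
    · rintro rfl; exact h (self_mem_seg n _)
    · exact h.2

/-- Direction of a point of the star. -/
noncomputable def starDir (n : ℕ) (x : starGraph n) : ℂ := (x : ℂ) / ‖(x : ℂ)‖

theorem starDir_pow (n : ℕ) (hn : 3 ≤ n) (x : starGraph n) (hx : (x : ℂ) ≠ 0) :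
    starDir n x ^ n = 1 := by
  rw [starDir, div_pow, ((mem_star n hn x).1 x.2).2, div_self]
  apply pow_ne_zero
  simpa using hx

theorem finite_roots (n : ℕ) (hn : 3 ≤ n) : {w : ℂ | w ^ n = 1}.Finite := by
  refine (Set.finite_range (starVertex n)).subset ?_
  intro w hw
  obtain ⟨k, hk⟩ := exists_starVertex n hn w hw
  exact ⟨k, hk.symm⟩

theorem starDir_const (n : ℕ) (hn : 3 ≤ n) (S : Set (starGraph n)) (hS : IsPreconnected S)
    (h0 : ∀ x ∈ S, (x : ℂ) ≠ 0) : ∃ w, ∀ x ∈ S, starDir n x = w := by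
  obtain ⟨w, -, hw⟩ := hS.eqOn_const_of_mapsTo (finite_roots n hn).isDiscrete (f := starDir n) (by
      intro x hx
      have : (‖(x : ℂ)‖ : ℂ) ≠ 0 := by simpa using h0 x hx
      apply ContinuousAt.continuousWithinAt
      unfold starDir
      fun_prop (disch := assumption)) (fun x hx => starDir_pow n hn x (h0 x hx)) ⟨1, one_pow n⟩
  exact ⟨w, hw⟩

theorem not_twoPiece_zero (n : ℕ) (hn : 3 ≤ n) : ¬ TwoPiece (starZero n hn) := by
  rintro ⟨A, B, hA, hB, h⟩
  have hne : ∀ x ∈ A ∪ B, (x : ℂ) ≠ 0 := by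
    intro x hx h0
    rw [← h] at hx
    exact hx (Subtype.ext h0)
  obtain ⟨a, ha⟩ := starDir_const n hn A hA (fun x hx => hne x (Or.inl hx))
  obtain ⟨b, hb⟩ := starDir_const n hn B hB (fun x hx => hne x (Or.inr hx))
  have hp := Complex.isPrimitiveRoot_exp n (by omega)
  have hall : ∀ w : ℂ, w ^ n = 1 → w = a ∨ w = b := by
    intro w hw
    have hn1 := norm_of_pow n hn w hw
    let x : starGraph n := ⟨w, root_mem_star n hn hw⟩
    have hx : starDir n x = w := by simp [starDir, x, hn1]
    have : x ∈ A ∪ B := by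
      rw [← h]
      intro h0
      have : w = 0 := congrArg Subtype.val h0
      rw [this] at hn1
      simp at hn1
    rcases this with h1 | h1
    · left; rw [← ha x h1, hx]
    · right; rw [← hb x h1, hx]
  have hcard := hp.card_nthRootsFinset
  have hsub : Polynomial.nthRootsFinset n (1 : ℂ) ⊆ {a, b} := by
    intro w hw
    rw [Polynomial.mem_nthRootsFinset (by omega)] at hw
    simpa using hall w hw
  have h1 := Finset.card_le_card hsub
  have h2 := Finset.card_le_two (a := a) (b := b)
  omega

theorem not_preconnected_compl (n : ℕ) (hn : 3 ≤ n) (p : starGraph n)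
    (hp : (p : ℂ) ≠ 0) (hp1 : ‖(p : ℂ)‖ < 1) : ¬ IsPreconnected ({p}ᶜ : Set (starGraph n)) := by
  intro h
  have hpp : 0 < ‖(p : ℂ)‖ := by simpa using hp
  -- the radial retraction onto the edge of `p`
  let U : Set (starGraph n) := {x | ‖(p : ℂ)‖ < ‖(x : ℂ)‖ ∧ starDir n x = starDir n p}
  let V : Set (starGraph n) := {x | ‖(x : ℂ)‖ < ‖(p : ℂ)‖ ∨ ((x : ℂ) ≠ 0 ∧ starDir n x ≠ starDir n p)}
  have hcont : ∀ x : starGraph n, (x : ℂ) ≠ 0 → ContinuousAt (starDir n) x := by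
    intro x hx
    have : (‖(x : ℂ)‖ : ℂ) ≠ 0 := by simpa using hx
    unfold starDir
    fun_prop (disch := assumption)
  have hnorm : Continuous (fun x : starGraph n => ‖(x : ℂ)‖) := by fun_prop
  have hval : Continuous (fun x : starGraph n => (x : ℂ)) := by fun_prop
  have hU : IsOpen U := by
    rw [isOpen_iff_mem_nhds]
    rintro x ⟨h1, h2⟩
    have hx : (x : ℂ) ≠ 0 := by simpa using hpp.trans h1
    have hfin : ({w : ℂ | w ^ n = 1} \ {starDir n p}).Finite := (finite_roots n hn).subset sdiff_subset
    have hop := hfin.isClosed.isOpen_compl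
    filter_upwards [hnorm.continuousAt.eventually (lt_mem_nhds h1),
      (hcont x hx).eventually (hop.mem_nhds (by rw [h2]; simp)),
      hval.continuousAt.eventually (isOpen_ne.mem_nhds hx)] with y hy1 hy2 hy3
    refine ⟨hy1, ?_⟩
    by_contra hne
    exact hy2 ⟨starDir_pow n hn y hy3, hne⟩
  have hV : IsOpen V := by
    rw [isOpen_iff_mem_nhds]
    rintro x (h1 | ⟨hx, h2⟩)
    · filter_upwards [hnorm.continuousAt.eventually (gt_mem_nhds h1)] with y hy
      exact Or.inl hy
    · filter_upwards [(hcont x hx).eventually (isOpen_ne.mem_nhds h2),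
        hval.continuousAt.eventually (isOpen_ne.mem_nhds hx)] with y hy1 hy2
      exact Or.inr ⟨hy2, hy1⟩
  obtain ⟨x, -, ⟨h1, h2⟩, h3⟩ := h U V hU hV (by
      intro x hx
      by_cases h1 : ‖(x : ℂ)‖ < ‖(p : ℂ)‖
      · exact Or.inr (Or.inl h1)
      push Not at h1
      have hx0 : (x : ℂ) ≠ 0 := by simpa using hpp.trans_le h1
      by_cases h2 : starDir n x = starDir n p
      · left
        refine ⟨lt_of_le_of_ne h1 ?_, h2⟩
        intro heq
        apply hx
        ext
        rw [starDir, starDir, ← heq] at h2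
        have : (‖(p : ℂ)‖ : ℂ) ≠ 0 := by simpa using hp
        exact (div_left_inj' this).1 h2
      · exact Or.inr (Or.inr ⟨hx0, h2⟩))
    (by
      let x : starGraph n := ⟨starDir n p, root_mem_star n hn (starDir_pow n hn p hp)⟩
      have hx : ‖(x : ℂ)‖ = 1 := norm_of_pow n hn _ (starDir_pow n hn p hp)
      refine ⟨x, ?_, ?_, ?_⟩
      · intro h
        have h' : x = p := h
        rw [h'] at hx
        exact hp1.ne hx
      · rw [hx]; exact hp1
      · rw [starDir, hx]; simp [x])
    (by
      refine ⟨starZero n hn, ?_, Or.inl ?_⟩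
      · intro h
        exact hp (congrArg Subtype.val h).symm
      · simpa [starZero] using hp)
  rcases h3 with h3 | h3
  · exact absurd h1 h3.not_gt
  · exact h3.2 h2

theorem TwoPiece.map {X : Type*} [TopologicalSpace X] (g : X ≃ₜ X) {p : X} (h : TwoPiece p) :
    TwoPiece (g p) := by
  obtain ⟨A, B, hA, hB, h⟩ := h
  refine ⟨g '' A, g '' B, hA.image _ g.continuous.continuousOn, hB.image _ g.continuous.continuousOn, ?_⟩
  rw [← image_union, ← h, image_compl_eq g.bijective, image_singleton]

theorem homeo_fix_zero (n : ℕ) (hn : 3 ≤ n) (g : starGraph n ≃ₜ starGraph n) :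
    g (starZero n hn) = starZero n hn := by
  by_contra h
  have h1 : TwoPiece (g (starZero n hn)) :=
    twoPiece_of_ne n hn _ (fun h0 => h (Subtype.ext h0))
  have := h1.map g.symm
  rw [g.symm_apply_apply] at this
  exact not_twoPiece_zero n hn this

theorem homeo_norm_one (n : ℕ) (hn : 3 ≤ n) (g : starGraph n ≃ₜ starGraph n) (p : starGraph n)
    (hp : ‖(p : ℂ)‖ = 1) : ‖((g p : starGraph n) : ℂ)‖ = 1 := by
  have h1 := compl_preconnected_of_norm_one n hn p hp
  have h2 := h1.image g g.continuous.continuousOn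
  rw [image_compl_eq g.bijective, image_singleton] at h2
  by_contra h
  have hlt : ‖((g p : starGraph n) : ℂ)‖ < 1 := lt_of_le_of_ne ((mem_star n hn _).1 (g p).2).1 h
  refine not_preconnected_compl n hn (g p) ?_ hlt h2
  intro h0
  have h3 : g p = g (starZero n hn) := by
    rw [homeo_fix_zero n hn g]; exact Subtype.ext h0
  rw [g.injective h3] at hp
  simp [starZero] at hp

theorem two_le_height (n : ℕ) (hn : 3 ≤ n) (G : Subgroup (starGraph n ≃ₜ starGraph n)) :
    2 ≤ height G := by
  apply le_sSup
  refine ⟨2, ?_, rfl⟩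
  have hnorm : Continuous (fun x : starGraph n => ‖(x : ℂ)‖) := by fun_prop
  obtain ⟨v, hv⟩ := exists_norm n hn 1 (by simp)
  obtain ⟨u, hu⟩ := exists_norm n hn (1 / 2) (by constructor <;> norm_num)
  have hz : ‖((starZero n hn : starGraph n) : ℂ)‖ = 0 := by simp [starZero]
  refine ⟨![{starZero n hn}, {starZero n hn} ∪ {x | ‖(x : ℂ)‖ = 1}, univ], ?_, ?_, rfl⟩
  · rw [Fin.strictMono_iff_lt_succ]
    intro i
    fin_cases i
    · change ({starZero n hn} : Set (starGraph n)) ⊂ {starZero n hn} ∪ {x | ‖(x : ℂ)‖ = 1}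
      refine Set.ssubset_iff_exists.2 ⟨subset_union_left, v, Or.inr hv, ?_⟩
      intro h
      rw [mem_singleton_iff] at h
      rw [h, hz] at hv
      norm_num at hv
    · change ({starZero n hn} ∪ {x | ‖(x : ℂ)‖ = 1} : Set (starGraph n)) ⊂ univ
      refine Set.ssubset_iff_exists.2 ⟨subset_univ _, u, mem_univ _, ?_⟩
      rintro (h | h)
      · rw [mem_singleton_iff] at h
        rw [h, hz] at hu
        norm_num at hu
      · rw [Set.mem_ofPred_eq, hu] at h
        norm_num at h
  · intro i
    fin_cases i
    · refine ⟨⟨_, rfl⟩, isClosed_singleton, ?_⟩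
      intro g _ y hy
      have hy' : y = starZero n hn := hy
      rw [hy']
      exact homeo_fix_zero n hn g
    · refine ⟨⟨v, Or.inr hv⟩, isClosed_singleton.union (isClosed_eq hnorm continuous_const), ?_⟩
      rintro g _ y (hy | hy)
      · have hy' : y = starZero n hn := hy
        rw [hy']
        exact Or.inl (homeo_fix_zero n hn g)
      · exact Or.inr (homeo_norm_one n hn g y hy)
    · exact ⟨⟨v, mem_univ _⟩, isClosed_univ, fun _ _ _ _ => mem_univ _⟩

/-- The set of achievable heights on the star graph `*_n` is `{2, 3, 4, …} ∪ {+∞}`. -/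
theorem PH_star (n : ℕ) (hn : 3 ≤ n) :
    PH (↥(starGraph n)) = {h : ℕ∞ | 2 ≤ h} := by
  ext h
  constructor
  · rintro ⟨G, rfl⟩
    exact two_le_height n hn G
  · intro hh
    have hh' : 2 ≤ h := hh
    induction h using ENat.recTopCoe with
    | top => exact top_mem n hn
    | coe m => exact finite_height_mem n hn m (by exact_mod_cast hh')
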